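/- Let U ⊆ ℂ be open with every connected component simply connected, and let f : U → ℂ be holomorphic. Define the domains of the iterates of f by D₁ = U and D_{n+1} = { z ∈ U : f(z) ∈ D_n } (so D_n is the domain of definition of fⁿ as a partial map). Then for every n ≥ 1, D_n is open and every connected component of D_n is simply connected. -/

import Mathlib

/-!
The proof replaces simple connectedness of the components of an open set `V ⊆ ℂ` by the condition
that `V` has no holes: every bounded open `Ω` with `∂Ω ⊆ V` lies in `V`.

* If the components of `V` are simply connected and `a ∈ Ω \ V`, then `z - a` has a logarithm on
  `V`, in particular on `∂Ω`. Extending it continuously into `Ω` gives a nowhere vanishing function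
  on `ℂ` which agrees with `z - a` outside `Ω`, and hence a logarithm of `z - a` on a large circle.
* Absence of holes passes to preimages: for connected `Ω` with boundary in the preimage of `W`,
  either `f` is constant on `Ω`, or `f(Ω)` is open with `∂f(Ω) ⊆ f(∂Ω) ⊆ W`, so `f(Ω) ⊆ W`.
* In a connected open set without holes, a loop is homotopic to a walk on a fine square grid. Among
  the cells around which a reduced closed walk has nonzero winding number, take one that is as high
  as possible in its column. It lies in `V`, as there are no holes, and its top edge is on the walk,
  so this edge can be replaced by the other three edges of the cell. With a weight that makes high
  horizontal edges expensive, this descent terminates.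
-/

open Set Filter Topology Bornology SimpleGraph

section ConnectedComponentIn

variable {X : Type*} [TopologicalSpace X]

theorem closure_connectedComponentIn_inter_subset (F : Set X) (x : X) :
    closure (connectedComponentIn F x) ∩ F ⊆ connectedComponentIn F x := by
  by_cases hx : x ∈ F
  · exact (isPreconnected_connectedComponentIn.subset_closure
      (subset_inter subset_closure (connectedComponentIn_subset F x))
      inter_subset_left).subset_connectedComponentIn
        ⟨subset_closure (mem_connectedComponentIn hx), hx⟩ inter_subset_right
  · simp [connectedComponentIn_eq_empty hx]

theorem isOpen_sdiff_connectedComponentIn {V : Set X} (hV : IsOpen V) (x : X) :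
    IsOpen (V \ connectedComponentIn V x) := by
  have : V \ connectedComponentIn V x = V \ closure (connectedComponentIn V x) :=
    Subset.antisymm
      (fun _ hz => ⟨hz.1, fun hcl =>
        hz.2 (closure_connectedComponentIn_inter_subset V x ⟨hcl, hz.1⟩)⟩)
      (sdiff_subset_sdiff_right subset_closure)
  exact this ▸ hV.sdiff isClosed_closure

theorem frontier_connectedComponentIn_subset [LocallyConnectedSpace X] {V : Set X}
    (hV : IsOpen V) (x : X) : frontier (connectedComponentIn V x) ⊆ frontier V := by
  rw [hV.connectedComponentIn.frontier_eq, hV.frontier_eq]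
  exact fun p ⟨hcl, hp⟩ => ⟨closure_mono (connectedComponentIn_subset V x) hcl,
    fun hpV => hp (closure_connectedComponentIn_inter_subset V x ⟨hcl, hpV⟩)⟩

end ConnectedComponentIn

theorem nonempty_frontier_of_isBounded {E : Type*} [NormedAddCommGroup E] [NormedSpace ℝ E]
    [Nontrivial E] {A : Set E} (hA : A.Nonempty) (hb : IsBounded A) : (frontier A).Nonempty := by
  refine nonempty_frontier_iff.2 ⟨hA, ?_⟩
  rintro rfl
  exact NormedSpace.unbounded_univ ℝ E hb

/-- A set `V` has no holes if every bounded open set whose boundary lies in `V` lies in `V`. For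
open subsets of the plane this is equivalent to simple connectedness of the components, but it
passes more visibly to holomorphic preimages. -/
def HoleFree {E : Type*} [TopologicalSpace E] [Bornology E] (V : Set E) : Prop :=
  ∀ Ω : Set E, IsOpen Ω → IsBounded Ω → frontier Ω ⊆ V → Ω ⊆ V

namespace HoleFree

theorem of_isPreconnected {E : Type*} [TopologicalSpace E] [Bornology E] [LocallyConnectedSpace E]
    {V : Set E} (h : ∀ Ω : Set E, IsOpen Ω → IsPreconnected Ω → IsBounded Ω →
      frontier Ω ⊆ V → Ω ⊆ V) : HoleFree V :=
  fun Ω hΩ hb hfr z hz =>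
    h (connectedComponentIn Ω z) hΩ.connectedComponentIn isPreconnected_connectedComponentIn
      (hb.subset (connectedComponentIn_subset Ω z))
      ((frontier_connectedComponentIn_subset hΩ z).trans hfr) (mem_connectedComponentIn hz)

theorem of_isOpen_sdiff {E : Type*} [NormedAddCommGroup E] [NormedSpace ℝ E] [Nontrivial E]
    {V C : Set E} (hV : HoleFree V) (hCV : C ⊆ V) (hC : IsOpen C) (hVC : IsOpen (V \ C)) :
    HoleFree C := by
  intro Ω hΩ hb hfr
  have hΩV : Ω ⊆ V := hV Ω hΩ hb (hfr.trans hCV)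
  have hopen : Ω \ C = Ω ∩ (V \ C) := by
    rw [← inter_sdiff_assoc, inter_eq_self_of_subset_left hΩV]
  have hclosed : Ω \ C = closure Ω \ C := by
    rw [closure_eq_self_union_frontier, union_sdiff_distrib, sdiff_eq_empty.2 hfr, union_empty]
  have hclopen : IsClopen (Ω \ C) :=
    ⟨hclosed ▸ isClosed_closure.sdiff hC, hopen ▸ hΩ.inter hVC⟩
  refine sdiff_eq_empty.1 (not_nonempty_iff_eq_empty.1 fun hne => ?_)
  exact (nonempty_frontier_of_isBounded hne (hb.subset sdiff_subset)).ne_empty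
    hclopen.frontier_eq

end HoleFree

theorem exists_continuousOn_exp_eq_of_simplyConnected_components {X : Type*} [TopologicalSpace X]
    [LocallyPathConnectedSpace X] {U : Set X} (hU : IsOpen U)
    (hUsc : ∀ x ∈ U, SimplyConnectedSpace (connectedComponentIn U x)) {g : X → ℂ}
    (hg : ContinuousOn g U) (hg0 : ∀ z ∈ U, g z ≠ 0) :
    ∃ L : X → ℂ, ContinuousOn L U ∧ ∀ z ∈ U, Complex.exp (L z) = g z := by
  have hlog : ∀ x ∈ U, ∃ L : X → ℂ, ContinuousOn L (connectedComponentIn U x) ∧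
      EqOn (Complex.exp ∘ L) g (connectedComponentIn U x) := fun x hx =>
    have hsub := connectedComponentIn_subset U x
    Complex.exists_continuousOn_eqOn_exp_comp (hUsc x hx) hU.connectedComponentIn (hg.mono hsub)
      (fun ⟨z, hz, hz0⟩ => hg0 z (hsub hz) hz0)
  have hlog' : ∀ C ∈ connectedComponentIn U '' U, ∃ L : X → ℂ, ContinuousOn L C ∧
      EqOn (Complex.exp ∘ L) g C := by
    rintro _ ⟨x, hx, rfl⟩
    exact hlog x hx
  choose! L hLc hLexp using hlog'
  refine ⟨fun z => L (connectedComponentIn U z) z, fun z hz => ?_, fun z hz =>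
    hLexp _ (mem_image_of_mem _ hz) (mem_connectedComponentIn hz)⟩
  have hnhds : connectedComponentIn U z ∈ 𝓝 z :=
    hU.connectedComponentIn.mem_nhds (mem_connectedComponentIn hz)
  refine (((hLc _ (mem_image_of_mem _ hz)).continuousAt hnhds).congr ?_).continuousWithinAt
  filter_upwards [hnhds] with w hw
  rw [connectedComponentIn_eq hw]

theorem not_exists_continuousOn_sphere_exp_eq_sub (a : ℂ) {R : ℝ} (hR : 0 < R) :
    ¬ ∃ G : ℂ → ℂ, ContinuousOn G (Metric.sphere a R) ∧
      ∀ z ∈ Metric.sphere a R, Complex.exp (G z) = z - a := by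
  rintro ⟨G, hG, hexp⟩
  have hmem : ∀ θ, circleMap a R θ ∈ Metric.sphere a R := circleMap_mem_sphere a hR.le
  have hlift : (fun θ : ℝ => G (circleMap a R θ)) =
      fun θ : ℝ => G (circleMap a R 0) + θ * Complex.I := by
    refine Complex.isCoveringMap_exp.eq_of_comp_eq
      (hG.comp_continuous (continuous_circleMap a R) hmem) (by fun_prop) ?_ (0 : ℝ) (by simp)
    ext θ
    simp only [Function.comp_apply, Complex.exp_add, hexp _ (hmem _)]
    simp [circleMap]
  have h2π := congrFun hlift (2 * Real.pi)
  simp [circleMap] at h2π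

theorem holeFree_of_simplyConnected_components {U : Set ℂ} (hU : IsOpen U)
    (hUsc : ∀ x ∈ U, SimplyConnectedSpace (connectedComponentIn U x)) : HoleFree U := by
  classical
  intro Ω _ hb hfr a haΩ
  by_contra haU
  obtain ⟨g, hg, hgexp⟩ := exists_continuousOn_exp_eq_of_simplyConnected_components hU hUsc
    (g := fun z => z - a) (by fun_prop) (fun z hz hza => haU (sub_eq_zero.1 hza ▸ hz))
  obtain ⟨L, hL⟩ := ContinuousMap.exists_restrict_eq (Y := ℂ) (isClosed_frontier (s := Ω))
    ⟨(frontier Ω).domRestrict g, (hg.mono hfr).domRestrict⟩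
  have hLexp : ∀ z ∈ frontier Ω, Complex.exp (L z) = z - a := fun z hz => by
    rw [← hgexp z (hfr hz)]
    exact congrArg (fun F => Complex.exp (F ⟨z, hz⟩)) hL
  let F : ℂ → ℂ := Ω.piecewise (fun z => Complex.exp (L z)) (fun z => z - a)
  have hF : Continuous F := Continuous.piecewise hLexp (by fun_prop) (by fun_prop)
  have hF0 : ∀ z, F z ≠ 0 := fun z => by
    by_cases hz : z ∈ Ω
    · simp [F, hz]
    · simpa [F, hz, sub_eq_zero] using (ne_of_mem_of_not_mem haΩ hz).symm
  obtain ⟨G, hG, hGexp⟩ := Complex.exists_continuousOn_eqOn_exp_comp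
    (Homeomorph.Set.univ ℂ).toHomotopyEquiv.simplyConnectedSpace isOpen_univ hF.continuousOn
    (fun ⟨z, _, hz⟩ => hF0 z hz)
  obtain ⟨R, hR, hΩR⟩ := hb.subset_ball_lt 0 a
  refine not_exists_continuousOn_sphere_exp_eq_sub a hR
    ⟨G, hG.mono (subset_univ _), fun z hz => (hGexp (mem_univ z)).trans ?_⟩
  have hzΩ : z ∉ Ω := fun hzΩ => (Metric.mem_ball.1 (hΩR hzΩ)).ne hz
  simp [F, hzΩ]

theorem HoleFree.inter_preimage {U W : Set ℂ} (hUfree : HoleFree U)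
    (hWfree : HoleFree W) (hU : IsOpen U) {f : ℂ → ℂ} (hf : DifferentiableOn ℂ f U) :
    HoleFree (U ∩ f ⁻¹' W) := by
  refine HoleFree.of_isPreconnected fun Ω hΩ hconn hb hfr => ?_
  have hΩU : Ω ⊆ U := hUfree Ω hΩ hb (hfr.trans inter_subset_left)
  have hclU : closure Ω ⊆ U := closure_eq_self_union_frontier Ω ▸
    union_subset hΩU (hfr.trans inter_subset_left)
  have hfcl : ContinuousOn f (closure Ω) := hf.continuousOn.mono hclU
  have hfrW : f '' frontier Ω ⊆ W := image_subset_iff.2 (hfr.trans inter_subset_right)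
  refine subset_inter hΩU ?_
  rcases ((hf.analyticOnNhd hU).mono hΩU).is_constant_or_isOpen hconn with ⟨w, hw⟩ | hopen
  · intro z hz
    obtain ⟨p, hp⟩ := nonempty_frontier_of_isBounded ⟨z, hz⟩ hb
    have hfp : f p = w := (EqOn.of_subset_closure hw hfcl continuousOn_const subset_closure
      Subset.rfl) (frontier_subset_closure hp)
    rw [mem_preimage, hw z hz, ← hfp]
    exact hfrW (mem_image_of_mem f hp)
  · have hcompact : IsCompact (f '' closure Ω) := hb.isCompact_closure.image_of_continuousOn hfcl
    have hfrontier : frontier (f '' Ω) ⊆ f '' frontier Ω := by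
      rw [(hopen Ω Subset.rfl hΩ).frontier_eq, sdiff_subset_iff, ← image_union,
        ← closure_eq_self_union_frontier]
      exact closure_minimal (image_mono subset_closure) hcompact.isClosed
    exact image_subset_iff.1 (hWfree (f '' Ω) (hopen Ω Subset.rfl hΩ)
      (hcompact.isBounded.subset (image_mono subset_closure)) (hfrontier.trans hfrW))

section WalkProd

variable {V M : Type*} {G : SimpleGraph V} {u v w : V}

/-- The ordered product of an edge labelling `τ` along a walk; `walkSum` is its additive form. -/
@[to_additive]
def walkProd [Monoid M] (τ : V → V → M) (p : G.Walk u v) : M :=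
  (p.darts.map fun d => τ d.fst d.snd).prod

section Monoid

variable [Monoid M] {τ σ : V → V → M}

@[to_additive]
theorem walkProd_nil : walkProd τ (Walk.nil : G.Walk u u) = 1 := rfl

@[to_additive]
theorem walkProd_cons (h : G.Adj u v) (p : G.Walk v w) :
    walkProd τ (.cons h p) = τ u v * walkProd τ p := by
  simp [walkProd]

@[to_additive]
theorem walkProd_append (p : G.Walk u v) (q : G.Walk v w) :
    walkProd τ (p.append q) = walkProd τ p * walkProd τ q := by
  simp [walkProd]

theorem walkProd_mapLe {G' : SimpleGraph V} (h : G ≤ G') (p : G.Walk u v) :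
    walkProd τ (p.mapLe h) = walkProd τ p := by
  induction p with
  | nil => rfl
  | cons hadj p ih =>
    rw [walkProd_cons, ← ih]
    exact walkProd_cons (G := G') (h hadj) (p.mapLe h)

@[to_additive]
theorem walkProd_congr {p : G.Walk u v} (h : ∀ d ∈ p.darts, τ d.fst d.snd = σ d.fst d.snd) :
    walkProd τ p = walkProd σ p :=
  congrArg List.prod (List.map_congr_left h)

@[to_additive]
theorem walkProd_eq_one {p : G.Walk u v} (h : ∀ d ∈ p.darts, τ d.fst d.snd = 1) :
    walkProd τ p = 1 :=
  (walkProd_congr (σ := 1) h).trans (by simp [walkProd])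

end Monoid

theorem walkSum_add [AddCommMonoid M] (f g : V → V → M) (p : G.Walk u v) :
    walkSum (fun a b => f a b + g a b) p = walkSum f p + walkSum g p :=
  List.sum_map_add

theorem walkSum_sub [AddCommGroup M] (φ : V → M) (p : G.Walk u v) :
    walkSum (fun a b => φ b - φ a) p = φ v - φ u := by
  induction p with
  | nil => simp [walkSum_nil]
  | cons h p ih => simp [walkSum_cons, ih]

theorem walkSum_eq_of_eq_add_sub [AddCommGroup M] {f g : V → V → M} (φ : V → M) {p : G.Walk u u}
    (h : ∀ d ∈ p.darts, f d.fst d.snd = g d.fst d.snd + (φ d.snd - φ d.fst)) :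
    walkSum f p = walkSum g p := by
  rw [walkSum_congr (σ := fun a b => g a b + (φ b - φ a)) h, walkSum_add, walkSum_sub, sub_self,
    add_zero]

theorem walkProd_reverse [Group M] {τ : V → V → M}
    (hτ : ∀ a b, G.Adj a b → τ a b * τ b a = 1) (p : G.Walk u v) :
    walkProd τ p.reverse = (walkProd τ p)⁻¹ := by
  induction p with
  | nil => simp [walkProd_nil]
  | cons h p ih =>
    simp [walkProd_append, walkProd_cons, walkProd_nil, ih,
      eq_inv_of_mul_eq_one_right (hτ _ _ h)]

theorem walkSum_reverse_of_symm [AddCommMonoid M] {f : V → V → M} (hf : ∀ a b, f a b = f b a)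
    (p : G.Walk u v) : walkSum f p.reverse = walkSum f p := by
  induction p with
  | nil => simp [walkSum_nil]
  | cons h p ih => simp [walkSum_append, walkSum_cons, walkSum_nil, ih, hf,
      add_comm]

end WalkProd

section ReducedWalk

variable {V : Type*} {G : SimpleGraph V} {u v : V}

/-- A walk is reduced if it traverses no edge in both directions. -/
def IsReducedWalk (p : G.Walk u v) : Prop :=
  ∀ d ∈ p.darts, d.symm ∉ p.darts

theorem exists_eq_append_of_not_isReducedWalk {p : G.Walk u v} (hp : ¬ IsReducedWalk p) :
    ∃ (a b : V) (h : G.Adj a b) (p₁ : G.Walk u a) (q : G.Walk b b) (p₂ : G.Walk a v),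
      p = p₁.append (.cons h (q.append (.cons h.symm p₂))) := by
  simp only [IsReducedWalk, not_forall, not_not] at hp
  obtain ⟨d, hd, hd'⟩ := hp
  obtain ⟨p₁, p₂, rfl⟩ := (Walk.isSubwalk_toWalk_adj_iff_mem_darts p).2 hd
  simp only [Walk.darts_append, List.mem_append, Adj.darts_toWalk, List.mem_singleton,
    d.symm_ne, or_false] at hd'
  rcases hd' with hd' | hd'
  · obtain ⟨p₁, q, rfl⟩ := (Walk.isSubwalk_toWalk_adj_iff_mem_darts p₁).2 hd'
    exact ⟨_, _, d.adj.symm, p₁, q, p₂, by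
      simp only [Adj.toWalk, ← Walk.append_assoc, Walk.cons_append, Walk.nil_append]
      rfl⟩
  · obtain ⟨q, p₂, rfl⟩ := (Walk.isSubwalk_toWalk_adj_iff_mem_darts p₂).2 hd'
    exact ⟨_, _, d.adj, p₁, q, p₂, by
      simp only [Adj.toWalk, ← Walk.append_assoc, Walk.cons_append, Walk.nil_append]
      rfl⟩

end ReducedWalk

section Traversals

variable {V : Type*} [DecidableEq V] {G : SimpleGraph V} {a b u v : V}

/-- The number of times a walk traverses the edge from `a` to `b`, minus the number of times it
traverses it from `b` to `a`. -/
def traversals (a b : V) (p : G.Walk u v) : ℤ :=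
  walkSum (fun u v => (if u = a ∧ v = b then 1 else 0) - (if u = b ∧ v = a then 1 else 0)) p

theorem exists_dart_of_traversals_ne_zero {p : G.Walk u v} (h : traversals a b p ≠ 0) :
    ∃ d ∈ p.darts, (d.fst = a ∧ d.snd = b) ∨ (d.fst = b ∧ d.snd = a) := by
  contrapose! h
  refine walkSum_eq_zero fun d hd => ?_
  have hne := h d hd
  grind

theorem traversals_swap (a b : V) (p : G.Walk u v) : traversals b a p = -traversals a b p := by
  rw [eq_neg_iff_add_eq_zero, traversals, traversals, ← walkSum_add]
  exact walkSum_eq_zero fun d _ => by ring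

theorem adj_of_traversals_ne_zero {p : G.Walk u v} (h : traversals a b p ≠ 0) : G.Adj a b := by
  obtain ⟨d, -, ⟨rfl, rfl⟩ | ⟨rfl, rfl⟩⟩ := exists_dart_of_traversals_ne_zero h
  exacts [d.adj, d.adj.symm]

theorem IsReducedWalk.traversals_ne_zero {p : G.Walk u v} (hp : IsReducedWalk p) {d : G.Dart}
    (hd : d ∈ p.darts) : traversals d.fst d.snd p ≠ 0 := by
  have hnonneg : ∀ e ∈ p.darts, (0 : ℤ) ≤ (if e.fst = d.fst ∧ e.snd = d.snd then 1 else 0) -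
      (if e.fst = d.snd ∧ e.snd = d.fst then 1 else 0) := by
    intro e he
    have hne : ¬ (e.fst = d.snd ∧ e.snd = d.fst) := fun h =>
      hp d hd ((Dart.ext _ _ (Prod.ext h.1 h.2) : e = d.symm) ▸ he)
    grind
  have hle := List.single_le_sum (List.forall_mem_map.2 hnonneg) _ (List.mem_map_of_mem hd)
  have hpos : (0 : ℤ) < traversals d.fst d.snd p := by
    refine lt_of_lt_of_le ?_ hle
    simp [d.fst_ne_snd]
  exact hpos.ne'

end Traversals

section Grid

theorem hasse_int_prod_adj {u v : ℤ × ℤ} : (hasse (ℤ × ℤ)).Adj u v ↔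
    (u.2 = v.2 ∧ (v.1 = u.1 + 1 ∨ u.1 = v.1 + 1)) ∨
      (u.1 = v.1 ∧ (v.2 = u.2 + 1 ∨ u.2 = v.2 + 1)) := by
  simp only [hasse_prod, boxProd_adj, hasse_adj, Order.covBy_iff_add_one_eq]
  grind

/-- The signed number of times that a step from `u` to `v` on the grid crosses the vertical ray
going up from the centre of the unit cell with lower left corner `c`. -/
def crossing (c u v : ℤ × ℤ) : ℤ :=
  if c.2 < u.2 then (if c.1 < v.1 then 1 else 0) - (if c.1 < u.1 then 1 else 0) else 0

variable {G : SimpleGraph (ℤ × ℤ)} {u v : ℤ × ℤ}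

/-- The winding number of a closed grid walk around the centre of the unit cell with lower left
corner `c`, computed as the signed number of crossings of a vertical ray. -/
def winding (c : ℤ × ℤ) (p : G.Walk u v) : ℤ :=
  walkSum (crossing c) p

theorem winding_eq_winding_up_add (hG : G ≤ hasse (ℤ × ℤ)) (p : G.Walk u v) (x y : ℤ) :
    winding (x, y) p = winding (x, y + 1) p + traversals (x, y + 1) (x + 1, y + 1) p := by
  rw [winding, winding, traversals, ← walkSum_add]
  refine walkSum_congr fun d _ => ?_
  have hadj := hasse_int_prod_adj.1 (hG d.adj)
  grind [crossing]

theorem winding_eq_winding_right_add (hG : G ≤ hasse (ℤ × ℤ)) (p : G.Walk u u) (x y : ℤ) :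
    winding (x, y) p = winding (x + 1, y) p + traversals (x + 1, y + 1) (x + 1, y) p := by
  rw [winding, winding, traversals, ← walkSum_add]
  refine walkSum_eq_of_eq_add_sub (fun v => if y < v.2 ∧ v.1 = x + 1 then 1 else 0) fun d _ => ?_
  have hadj := hasse_int_prod_adj.1 (hG d.adj)
  grind [crossing]

theorem le_of_winding_ne_zero {p : G.Walk u u} {a c : ℤ × ℤ} (hp : ∀ v ∈ p.support, a ≤ v)
    (hc : winding c p ≠ 0) : a ≤ c := by
  have hfst : ∀ d ∈ p.darts, a ≤ d.fst := fun d hd => hp _ (p.dart_fst_mem_support_of_mem_darts hd)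
  have hsnd : ∀ d ∈ p.darts, a ≤ d.snd := fun d hd => hp _ (p.dart_snd_mem_support_of_mem_darts hd)
  refine ⟨not_lt.1 fun hleft => hc ?_, not_lt.1 fun hbelow => hc ?_⟩
  · refine walkSum_eq_zero fun d hd => ?_
    simp [crossing, hleft.trans_le (hfst d hd).1, hleft.trans_le (hsnd d hd).1]
  · refine (walkSum_eq_of_eq_add_sub (g := 0) (fun v => if c.1 < v.1 then 1 else 0)
      fun d hd => ?_).trans (walkSum_eq_zero fun _ _ => rfl)
    simp [crossing, hbelow.trans_le (hfst d hd).2]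

theorem ge_of_winding_ne_zero {p : G.Walk u v} {b c : ℤ × ℤ} (hp : ∀ v ∈ p.support, v ≤ b)
    (hc : winding c p ≠ 0) : c ≤ b := by
  have hfst : ∀ d ∈ p.darts, d.fst ≤ b := fun d hd => hp _ (p.dart_fst_mem_support_of_mem_darts hd)
  have hsnd : ∀ d ∈ p.darts, d.snd ≤ b := fun d hd => hp _ (p.dart_snd_mem_support_of_mem_darts hd)
  refine ⟨not_lt.1 fun hright => hc ?_, not_lt.1 fun habove => hc ?_⟩ <;>
    refine walkSum_eq_zero fun d hd => ?_
  · simp [crossing, ((hfst d hd).1.trans_lt hright).not_gt, ((hsnd d hd).1.trans_lt hright).not_gt]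
  · simp [crossing, ((hfst d hd).2.trans_lt habove).not_gt]

theorem finite_support_winding (p : G.Walk u u) : (fun c => winding c p).support.Finite := by
  obtain ⟨a, ha⟩ := (List.finite_toSet p.support).bddBelow
  obtain ⟨b, hb⟩ := (List.finite_toSet p.support).bddAbove
  exact (finite_Icc a b).subset fun c hc =>
    ⟨le_of_winding_ne_zero (fun _ hv => ha hv) hc, ge_of_winding_ne_zero (fun _ hv => hb hv) hc⟩

theorem IsReducedWalk.exists_winding_ne_zero (hG : G ≤ hasse (ℤ × ℤ)) {p : G.Walk u u}
    (hp : IsReducedWalk p) (hnil : ¬ p.Nil) : ∃ c, winding c p ≠ 0 := by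
  by_contra! hzero
  have hhor : ∀ x y, traversals (x, y) (x + 1, y) p = 0 := fun x y => by
    have h := winding_eq_winding_up_add hG p x (y - 1)
    rwa [hzero, hzero, zero_add, eq_comm, sub_add_cancel] at h
  have hvert : ∀ x y, traversals (x, y + 1) (x, y) p = 0 := fun x y => by
    have h := winding_eq_winding_right_add hG p (x - 1) y
    rwa [hzero, hzero, zero_add, eq_comm, sub_add_cancel] at h
  have hgrid : ∀ u v, (hasse (ℤ × ℤ)).Adj u v → traversals u v p = 0 := by
    rintro ⟨x, y⟩ ⟨x', y'⟩ hadj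
    rw [hasse_int_prod_adj] at hadj
    dsimp only at hadj
    obtain ⟨rfl, rfl | rfl⟩ | ⟨rfl, rfl | rfl⟩ := hadj
    · exact hhor x y
    · rw [traversals_swap, hhor, neg_zero]
    · rw [traversals_swap, hvert, neg_zero]
    · exact hvert x y'
  exact hp.traversals_ne_zero (Walk.firstDart_mem_darts hnil) (hgrid _ _ (hG (Dart.adj _)))

theorem IsReducedWalk.exists_dart_top_of_winding_ne_zero (hG : G ≤ hasse (ℤ × ℤ)) {p : G.Walk u u}
    (hp : IsReducedWalk p) (hnil : ¬ p.Nil) :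
    ∃ x y, winding (x, y) p ≠ 0 ∧ ∃ d ∈ p.darts,
      d.fst = (x, y + 1) ∧ d.snd = (x + 1, y + 1) ∨
        d.fst = (x + 1, y + 1) ∧ d.snd = (x, y + 1) := by
  obtain ⟨⟨x, y⟩, hxy, hmax⟩ := (finite_support_winding p).exists_maximal
    (hp.exists_winding_ne_zero hG hnil)
  have htop : winding (x, y + 1) p = 0 := by
    by_contra hne
    have hle : y + 1 ≤ y := (hmax hne (Prod.mk_le_mk.2 ⟨le_rfl, by lia⟩)).2
    lia
  refine ⟨x, y, hxy, exists_dart_of_traversals_ne_zero ?_⟩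
  rwa [Function.mem_support, winding_eq_winding_up_add hG, htop, zero_add] at hxy

/-- Every bounded region of unit cells whose boundary consists of edges of `G` consists of cells
satisfying `P`. Regions are encoded, with multiplicities, as finitely supported functions of the
lower left corners of the cells. -/
def EnclosesOnly (G : SimpleGraph (ℤ × ℤ)) (P : ℤ → ℤ → Prop) : Prop :=
  ∀ n : ℤ × ℤ → ℤ, n.support.Finite →
    (∀ x y, n (x, y) ≠ n (x, y + 1) → G.Adj (x, y + 1) (x + 1, y + 1)) →
    (∀ x y, n (x, y) ≠ n (x + 1, y) → G.Adj (x + 1, y + 1) (x + 1, y)) →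
    ∀ x y, n (x, y) ≠ 0 → P x y

theorem EnclosesOnly.of_winding_ne_zero {P : ℤ → ℤ → Prop} (hP : EnclosesOnly G P)
    (hG : G ≤ hasse (ℤ × ℤ)) {p : G.Walk u u} {x y : ℤ} (hxy : winding (x, y) p ≠ 0) : P x y := by
  refine hP _ (finite_support_winding p) (fun x y hne => ?_) (fun x y hne => ?_) x y hxy
  · rw [winding_eq_winding_up_add hG, ne_eq, add_eq_left] at hne
    exact adj_of_traversals_ne_zero hne
  · rw [winding_eq_winding_right_add hG, ne_eq, add_eq_left] at hne
    exact adj_of_traversals_ne_zero hne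

/-- A weight on the steps of a grid walk, which charges horizontal steps for their height above
`y₀` so heavily that pushing such a step down across a cell is a gain. -/
def heightWeight (y₀ : ℤ) (u v : ℤ × ℤ) : ℕ :=
  if u.2 = v.2 then 3 * (u.2 - y₀).toNat + 1 else 1

/-- The unit cell with lower left corner `(x, y)` is flat for an edge labelling `τ` on a subgraph
`G` of the grid if its other three edges belong to `G` and the product of `τ` along them is the
label of the top edge. -/
structure IsFlatCell {H : Type*} [Mul H] (G : SimpleGraph (ℤ × ℤ)) (τ : ℤ × ℤ → ℤ × ℤ → H)
    (x y : ℤ) : Prop where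
  left : G.Adj (x, y) (x, y + 1)
  bottom : G.Adj (x, y) (x + 1, y)
  right : G.Adj (x + 1, y) (x + 1, y + 1)
  prod_eq : τ (x, y + 1) (x, y) * (τ (x, y) (x + 1, y) * τ (x + 1, y) (x + 1, y + 1)) =
    τ (x, y + 1) (x + 1, y + 1)

variable {H : Type*} [Group H] {τ : ℤ × ℤ → ℤ × ℤ → H}

theorem IsFlatCell.exists_detour (hτ : ∀ u v, G.Adj u v → τ u v * τ v u = 1) {x y y₀ : ℤ}
    (hcell : IsFlatCell G τ x y) (hy : y₀ ≤ y) (huv : G.Adj u v)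
    (htop : u = (x, y + 1) ∧ v = (x + 1, y + 1) ∨ u = (x + 1, y + 1) ∧ v = (x, y + 1)) :
    ∃ q : G.Walk u v, walkProd τ q = τ u v ∧
      walkSum (heightWeight y₀) q < heightWeight y₀ u v ∧ ∀ w ∈ q.support, (x, y) ≤ w := by
  let q : G.Walk (x, y + 1) (x + 1, y + 1) :=
    .cons hcell.left.symm (.cons hcell.bottom (.cons hcell.right .nil))
  have hprod : walkProd τ q = τ (x, y + 1) (x + 1, y + 1) := by
    simp only [q, walkProd_cons, walkProd_nil, mul_one, hcell.prod_eq]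
  have hweight : walkSum (heightWeight y₀) q < 3 * (y + 1 - y₀).toNat + 1 := by
    simp only [q, walkSum_cons, walkSum_nil, heightWeight, add_eq_left, left_eq_add, one_ne_zero,
      ↓reduceIte, add_zero]
    lia
  have hsupp : ∀ w ∈ q.support, (x, y) ≤ w := by
    simp [q]
  obtain ⟨rfl, rfl⟩ | ⟨rfl, rfl⟩ := htop
  · exact ⟨q, hprod, by simpa [heightWeight] using hweight, hsupp⟩
  · refine ⟨q.reverse, ?_, ?_, by simpa using hsupp⟩
    · rw [walkProd_reverse hτ, hprod, inv_eq_of_mul_eq_one_right (hτ _ _ huv.symm)]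
    · rw [walkSum_reverse_of_symm fun a b => by grind [heightWeight]]
      simpa [heightWeight] using hweight

theorem IsReducedWalk.exists_lighter (hG : G ≤ hasse (ℤ × ℤ))
    (hτ : ∀ u v, G.Adj u v → τ u v * τ v u = 1) (hflat : EnclosesOnly G (IsFlatCell G τ))
    {a : ℤ × ℤ} {p : G.Walk u u} (hp : IsReducedWalk p) (hnil : ¬ p.Nil)
    (ha : ∀ v ∈ p.support, a ≤ v) :
    ∃ p' : G.Walk u u, walkProd τ p' = walkProd τ p ∧
      walkSum (heightWeight a.2) p' < walkSum (heightWeight a.2) p ∧ ∀ v ∈ p'.support, a ≤ v := by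
  obtain ⟨x, y, hxy, d, hd, htop⟩ := hp.exists_dart_top_of_winding_ne_zero hG hnil
  have hay : a ≤ (x, y) := le_of_winding_ne_zero ha hxy
  obtain ⟨q, hprod, hweight, hsupp⟩ :=
    (hflat.of_winding_ne_zero hG hxy).exists_detour hτ hay.2 d.adj htop
  obtain ⟨p₁, p₂, rfl⟩ := (Walk.isSubwalk_toWalk_adj_iff_mem_darts p).2 hd
  simp only [Walk.mem_support_append_iff] at ha
  refine ⟨(p₁.append q).append p₂, ?_, ?_, fun v hv => ?_⟩
  · simp only [walkProd_append, Adj.toWalk, walkProd_cons, walkProd_nil, mul_one, hprod]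
  · simpa only [walkSum_append, Adj.toWalk, walkSum_cons, walkSum_nil, add_zero,
      add_lt_add_iff_left, add_lt_add_iff_right]
  · rw [Walk.mem_support_append_iff, Walk.mem_support_append_iff] at hv
    rcases hv with (hv | hv) | hv
    exacts [ha v (.inl (.inl hv)), hay.trans (hsupp v hv), ha v (.inr hv)]

theorem walkProd_eq_one_of_enclosesOnly_isFlatCell (hG : G ≤ hasse (ℤ × ℤ))
    (hτ : ∀ u v, G.Adj u v → τ u v * τ v u = 1) (hflat : EnclosesOnly G (IsFlatCell G τ))
    (p : G.Walk u u) : walkProd τ p = 1 := by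
  obtain ⟨a, ha⟩ := (List.finite_toSet p.support).bddBelow
  replace ha : ∀ v ∈ p.support, a ≤ v := fun v hv => ha hv
  induction hm : walkSum (heightWeight a.2) p using Nat.strong_induction_on generalizing u p with
  | _ m ih =>
  subst hm
  by_cases hred : IsReducedWalk p
  · by_cases hnil : p.Nil
    · cases hnil
      exact walkProd_nil
    · obtain ⟨p', hprod, hweight, hsupp⟩ := hred.exists_lighter hG hτ hflat hnil ha
      exact hprod ▸ ih _ hweight p' hsupp rfl
  · obtain ⟨b, c, h, p₁, q, p₂, rfl⟩ := exists_eq_append_of_not_isReducedWalk hred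
    have hpos : 0 < heightWeight a.2 b c := by grind [heightWeight]
    simp only [walkSum_append, walkSum_cons, Walk.mem_support_append_iff,
      Walk.support_cons, List.mem_cons] at ih ha
    have hq : walkProd τ q = 1 := ih _ (by lia) q (by grind) rfl
    have hp : walkProd τ (p₁.append p₂) = 1 :=
      ih _ (by rw [walkSum_append]; lia) (p₁.append p₂)
        (by simp only [Walk.mem_support_append_iff]; grind) rfl
    rw [walkProd_append] at hp
    rw [walkProd_append, walkProd_cons, walkProd_append, walkProd_cons, hq, one_mul,
      ← mul_assoc (τ _ _), hτ _ _ h, one_mul, hp]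

end Grid

section LoopClass

open CategoryTheory

variable {X : Type*} [TopologicalSpace X] {x₀ x y z : X}

/-- The class of the loop that runs from the base point `x₀` to `x` along the chosen path `s x`,
then along `p`, and back along `s y`. The opposite group makes concatenation of paths correspond to
multiplication from left to right. -/
noncomputable def loopClass (s : ∀ x, Path x₀ x) (p : Path x y) : (FundamentalGroup X x₀)ᵐᵒᵖ :=
  .op (.fromPath (.mk (((s x).trans p).trans (s y).symm)))

variable (s : ∀ x, Path x₀ x)

theorem loopClass_eq_of_homotopic {p q : Path x y} (h : p.Homotopic q) :
    loopClass s p = loopClass s q :=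
  congrArg MulOpposite.op <| Path.Homotopic.Quotient.eq.2 <|
    ((Path.Homotopic.refl _).hcomp h).hcomp (.refl _)

theorem loopClass_trans (p : Path x y) (q : Path y z) :
    loopClass s (p.trans q) = loopClass s p * loopClass s q := by
  rw [loopClass, loopClass, loopClass, ← MulOpposite.op_mul, FundamentalGroup.mul_def]
  simp only [Path.Homotopic.Quotient.mk_trans, Path.Homotopic.Quotient.mk_symm,
    Path.Homotopic.Quotient.trans_assoc]
  rw [← Path.Homotopic.Quotient.trans_assoc (Path.Homotopic.Quotient.symm _),
    Path.Homotopic.Quotient.symm_trans, Path.Homotopic.Quotient.refl_trans]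

theorem homotopic_refl_of_loopClass_eq_one {p : Path x x} (h : loopClass s p = 1) :
    p.Homotopic (.refl x) := by
  let a : FundamentalGroupoid.mk x₀ ⟶ FundamentalGroupoid.mk x := .mk (s x)
  let b : FundamentalGroupoid.mk x ⟶ FundamentalGroupoid.mk x := .mk p
  have hconj : (a ≫ b) ≫ Groupoid.inv a = 𝟙 _ := MulOpposite.op_injective h
  rw [Groupoid.inv_eq_inv, IsIso.comp_inv_eq, Category.id_comp, cancel_epi_id] at hconj
  exact Path.Homotopic.Quotient.eq.1 hconj

end LoopClass

section ConvexCocycle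

variable {E : Type*} [AddCommGroup E] [Module ℝ E] {H : Type*}

/-- A labelling `τ` of pairs of points is a cocycle on the convex subsets of `C`. -/
def IsConvexCocycle [Mul H] (C : Set E) (τ : E → E → H) : Prop :=
  ∀ ⦃S : Set E⦄, Convex ℝ S → S ⊆ C → ∀ ⦃a⦄, a ∈ S → ∀ ⦃b⦄, b ∈ S → ∀ ⦃c⦄, c ∈ S →
    τ a b * τ b c = τ a c

namespace IsConvexCocycle

variable [Group H] {C : Set E} {τ : E → E → H}

theorem self (hτ : IsConvexCocycle C τ) {a : E} (ha : a ∈ C) : τ a a = 1 :=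
  mul_eq_left.1 (hτ (convex_singleton a) (singleton_subset_iff.2 ha) rfl rfl rfl)

theorem mul_swap (hτ : IsConvexCocycle C τ) {a b : E} (h : segment ℝ a b ⊆ C) :
    τ a b * τ b a = 1 :=
  (hτ (convex_segment a b) h (left_mem_segment ℝ a b) (right_mem_segment ℝ a b)
    (left_mem_segment ℝ a b)).trans (hτ.self (h (left_mem_segment ℝ a b)))

end IsConvexCocycle

variable [TopologicalSpace E] [IsTopologicalAddGroup E] [ContinuousSMul ℝ E] {C S : Set E}

theorem homotopic_of_mem_convex (hS : Convex ℝ S) (hSC : S ⊆ C) {a b : C} {p q : Path a b}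
    (hp : ∀ t, (p t : E) ∈ S) (hq : ∀ t, (q t : E) ∈ S) : p.Homotopic q := by
  have ha : (a : E) ∈ S := by simpa only [Path.source] using hp 0
  have hb : (b : E) ∈ S := by simpa only [Path.target] using hp 1
  have : ContractibleSpace S := hS.contractibleSpace ⟨a, ha⟩
  let restrict (r : Path a b) (hr : ∀ t, (r t : E) ∈ S) : Path (⟨a, ha⟩ : S) ⟨b, hb⟩ :=
    { toFun t := ⟨r t, hr t⟩
      continuous_toFun := by fun_prop
      source' := by simp only [Path.source]
      target' := by simp only [Path.target] }
  exact (SimplyConnectedSpace.paths_homotopic (restrict p hp) (restrict q hq)).map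
    ⟨inclusion hSC, continuous_inclusion hSC⟩

/-- The straight path between two points of `C` joined by a segment inside `C`. -/
def segmentPath {a b : E} (h : segment ℝ a b ⊆ C) :
    Path (⟨a, h (left_mem_segment ℝ a b)⟩ : C) ⟨b, h (right_mem_segment ℝ a b)⟩ where
  toFun t := ⟨Path.segment a b t, h (Path.range_segment a b ▸ mem_range_self t)⟩
  continuous_toFun := by fun_prop
  source' := by simp only [Path.source]
  target' := by simp only [Path.target]

theorem segmentPath_mem_segment {a b : E} (h : segment ℝ a b ⊆ C) (t : unitInterval) :
    (segmentPath h t : E) ∈ segment ℝ a b :=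
  Path.range_segment a b ▸ mem_range_self t

open scoped Classical in
/-- The loop class of the segment from `a` to `b`, with junk value `1` if it leaves `C`. -/
noncomputable def segmentClass {x₀ : C} (s : ∀ x, Path x₀ x) (a b : E) :
    (FundamentalGroup C x₀)ᵐᵒᵖ :=
  if h : segment ℝ a b ⊆ C then loopClass s (segmentPath h) else 1

variable {x₀ : C} (s : ∀ x, Path x₀ x)

theorem loopClass_eq_segmentClass (hS : Convex ℝ S) (hSC : S ⊆ C) {a b : C} (p : Path a b)
    (hp : ∀ t, (p t : E) ∈ S) : loopClass s p = segmentClass s a b := by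
  have hab : segment ℝ (a : E) b ⊆ S :=
    hS.segment_subset (by simpa only [Path.source] using hp 0)
      (by simpa only [Path.target] using hp 1)
  rw [segmentClass, dif_pos (hab.trans hSC)]
  exact loopClass_eq_of_homotopic s
    (homotopic_of_mem_convex hS hSC hp fun t => hab (segmentPath_mem_segment _ t))

theorem isConvexCocycle_segmentClass : IsConvexCocycle C (segmentClass s) := by
  intro S hS hSC a ha b hb c hc
  have hab := hS.segment_subset ha hb
  have hbc := hS.segment_subset hb hc
  let p := segmentPath (hab.trans hSC)
  let q := segmentPath (hbc.trans hSC)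
  have hp : ∀ t, (p t : E) ∈ S := fun t => hab (segmentPath_mem_segment _ t)
  have hq : ∀ t, (q t : E) ∈ S := fun t => hbc (segmentPath_mem_segment _ t)
  have hpq : ∀ t, (p.trans q t : E) ∈ S := fun t => by
    rw [Path.trans_apply]
    split_ifs
    exacts [hp _, hq _]
  rw [← loopClass_eq_segmentClass s hS hSC p hp, ← loopClass_eq_segmentClass s hS hSC q hq,
    ← loopClass_trans, loopClass_eq_segmentClass s hS hSC _ hpq]

end ConvexCocycle

section PlaneGrid

open Complex

theorem convex_reProdIm {I J : Set ℝ} (hI : Convex ℝ I) (hJ : Convex ℝ J) : Convex ℝ (I ×ℂ J) :=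
  (hI.linear_preimage reLm).inter (hJ.linear_preimage imLm)

variable {δ : ℝ}

/-- The point of the square grid of mesh `δ` in the plane with integer coordinates `v`. -/
def gridPoint (δ : ℝ) (v : ℤ × ℤ) : ℂ := ⟨δ * v.1, δ * v.2⟩

/-- The closed cell of the square grid of mesh `δ` with lower left corner `gridPoint δ c`. -/
def gridCell (δ : ℝ) (c : ℤ × ℤ) : Set ℂ :=
  Icc (δ * c.1) (δ * (c.1 + 1)) ×ℂ Icc (δ * c.2) (δ * (c.2 + 1))

/-- The part of the square grid of mesh `δ` inside `V`: the vertices are all grid points, but the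
edges are only those grid edges which lie in `V`. -/
def gridGraph (δ : ℝ) (V : Set ℂ) : SimpleGraph (ℤ × ℤ) where
  Adj u v := (hasse (ℤ × ℤ)).Adj u v ∧ segment ℝ (gridPoint δ u) (gridPoint δ v) ⊆ V
  symm := ⟨fun _ _ h => ⟨h.1.symm, segment_symm ℝ (gridPoint δ _) _ ▸ h.2⟩⟩
  loopless := ⟨fun _ h => h.1.ne rfl⟩

theorem gridGraph_le_hasse {V : Set ℂ} : gridGraph δ V ≤ hasse (ℤ × ℤ) :=
  fun _ _ h => h.1

theorem gridGraph_mono {V W : Set ℂ} (h : V ⊆ W) : gridGraph δ V ≤ gridGraph δ W :=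
  fun _ _ huv => ⟨huv.1, huv.2.trans h⟩

theorem convex_gridCell (δ : ℝ) (c : ℤ × ℤ) : Convex ℝ (gridCell δ c) :=
  convex_reProdIm (convex_Icc _ _) (convex_Icc _ _)

theorem gridPoint_mem_gridCell (hδ : 0 ≤ δ) {c v : ℤ × ℤ} (hcv : c ≤ v) (hvc : v ≤ c + 1) :
    gridPoint δ v ∈ gridCell δ c := by
  have h₁ : (c.1 : ℝ) ≤ v.1 := mod_cast hcv.1
  have h₂ : (c.2 : ℝ) ≤ v.2 := mod_cast hcv.2
  have h₃ : (v.1 : ℝ) ≤ c.1 + 1 := mod_cast hvc.1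
  have h₄ : (v.2 : ℝ) ≤ c.2 + 1 := mod_cast hvc.2
  constructor <;> constructor <;> dsimp [gridPoint] <;> gcongr

/-- The lower left corner of a cell containing `z`. -/
noncomputable def gridFloor (δ : ℝ) (z : ℂ) : ℤ × ℤ := (⌊z.re / δ⌋, ⌊z.im / δ⌋)

theorem mul_floor_div_le (hδ : 0 < δ) (t : ℝ) : δ * ⌊t / δ⌋ ≤ t :=
  (le_div_iff₀' hδ).1 (Int.floor_le _)

theorem lt_mul_floor_div_add_one (hδ : 0 < δ) (t : ℝ) : t < δ * (⌊t / δ⌋ + 1) :=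
  (div_lt_iff₀' hδ).1 (Int.lt_floor_add_one _)

theorem mem_gridCell_gridFloor (hδ : 0 < δ) (z : ℂ) : z ∈ gridCell δ (gridFloor δ z) :=
  ⟨⟨mul_floor_div_le hδ _, (lt_mul_floor_div_add_one hδ _).le⟩,
    ⟨mul_floor_div_le hδ _, (lt_mul_floor_div_add_one hδ _).le⟩⟩

theorem eventually_mem_Icc_floor (t : ℝ) : ∀ᶠ s in 𝓝 t, t ∈ Icc (⌊s⌋ : ℝ) (⌊s⌋ + 1) := by
  filter_upwards [Ioo_mem_nhds (sub_lt_iff_lt_add.2 (Int.ceil_lt_add_one t))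
    (Int.lt_floor_add_one t)] with s hs
  have hle : ⌊s⌋ ≤ ⌊t⌋ := Int.lt_add_one_iff.1 (Int.floor_lt.2 (mod_cast hs.2))
  have hge : ⌈t⌉ ≤ ⌊s⌋ + 1 := sub_le_iff_le_add.1 (Int.le_floor.2 (mod_cast hs.1.le))
  exact ⟨Int.le_floor.1 hle, mod_cast Int.ceil_le.1 hge⟩

theorem eventually_mem_gridCell_gridFloor (hδ : 0 < δ) (z : ℂ) :
    ∀ᶠ w in 𝓝 z, z ∈ gridCell δ (gridFloor δ w) := by
  have hre : Tendsto (fun w : ℂ => w.re / δ) (𝓝 z) (𝓝 (z.re / δ)) :=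
    Continuous.tendsto (by fun_prop) z
  have him : Tendsto (fun w : ℂ => w.im / δ) (𝓝 z) (𝓝 (z.im / δ)) :=
    Continuous.tendsto (by fun_prop) z
  filter_upwards [hre.eventually (eventually_mem_Icc_floor _),
    him.eventually (eventually_mem_Icc_floor _)] with w hw₁ hw₂
  exact ⟨⟨(le_div_iff₀' hδ).1 hw₁.1, (div_le_iff₀' hδ).1 hw₁.2⟩,
    ⟨(le_div_iff₀' hδ).1 hw₂.1, (div_le_iff₀' hδ).1 hw₂.2⟩⟩

theorem le_add_one_of_mem_gridCell (hδ : 0 < δ) {x y x' y' : ℤ} {z : ℂ}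
    (hz : z ∈ gridCell δ (x, y)) (hz' : z ∈ gridCell δ (x', y')) : x ≤ x' + 1 ∧ y ≤ y' + 1 := by
  have hx : (x : ℝ) ≤ x' + 1 := le_of_mul_le_mul_left (hz.1.1.trans hz'.1.2) hδ
  have hy : (y : ℝ) ≤ y' + 1 := le_of_mul_le_mul_left (hz.2.1.trans hz'.2.2) hδ
  exact ⟨mod_cast hx, mod_cast hy⟩

theorem mem_segment_of_re_eq {a b z : ℂ} (ha : a.re = z.re) (hb : b.re = z.re)
    (him : z.im ∈ uIcc a.im b.im) : z ∈ segment ℝ a b := by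
  rw [← segment_eq_uIcc] at him
  obtain ⟨s, t, hs, ht, hst, h⟩ := him
  refine ⟨s, t, hs, ht, hst, Complex.ext ?_ ?_⟩
  · rw [add_re, smul_re, smul_re, ha, hb, ← add_smul, hst, one_smul]
  · rwa [add_im, smul_im, smul_im]

theorem mem_segment_of_im_eq {a b z : ℂ} (ha : a.im = z.im) (hb : b.im = z.im)
    (hre : z.re ∈ uIcc a.re b.re) : z ∈ segment ℝ a b := by
  rw [← segment_eq_uIcc] at hre
  obtain ⟨s, t, hs, ht, hst, h⟩ := hre
  refine ⟨s, t, hs, ht, hst, Complex.ext ?_ ?_⟩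
  · rwa [add_re, smul_re, smul_re]
  · rw [add_im, smul_im, smul_im, ha, hb, ← add_smul, hst, one_smul]

theorem mem_segment_of_mem_gridCell_right {x y : ℤ} {z : ℂ} (h : z ∈ gridCell δ (x, y))
    (h' : z ∈ gridCell δ (x + 1, y)) :
    z ∈ segment ℝ (gridPoint δ (x + 1, y + 1)) (gridPoint δ (x + 1, y)) := by
  have hre : δ * ((x + 1 : ℤ) : ℝ) = z.re := le_antisymm h'.1.1 (mod_cast h.1.2)
  exact mem_segment_of_re_eq hre hre (mem_uIcc.2 (.inr ⟨h.2.1, mod_cast h.2.2⟩))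

theorem mem_segment_of_mem_gridCell_up {x y : ℤ} {z : ℂ} (h : z ∈ gridCell δ (x, y))
    (h' : z ∈ gridCell δ (x, y + 1)) :
    z ∈ segment ℝ (gridPoint δ (x, y + 1)) (gridPoint δ (x + 1, y + 1)) := by
  have him : δ * ((y + 1 : ℤ) : ℝ) = z.im := le_antisymm h'.2.1 (mod_cast h.2.2)
  exact mem_segment_of_im_eq him him (mem_uIcc.2 (.inl ⟨h.1.1, mod_cast h.1.2⟩))

theorem mem_of_mem_gridCell_of_ne (hδ : 0 < δ) {V : Set ℂ} {n : ℤ × ℤ → ℤ}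
    (hup : ∀ x y, n (x, y) ≠ n (x, y + 1) → (gridGraph δ V).Adj (x, y + 1) (x + 1, y + 1))
    (hright : ∀ x y, n (x, y) ≠ n (x + 1, y) → (gridGraph δ V).Adj (x + 1, y + 1) (x + 1, y))
    {z : ℂ} {x y x' y' : ℤ} (hz : z ∈ gridCell δ (x, y)) (hz' : z ∈ gridCell δ (x', y'))
    (hne : n (x, y) ≠ n (x', y')) : z ∈ V := by
  obtain ⟨hx, hy⟩ := le_add_one_of_mem_gridCell hδ hz hz'
  obtain ⟨hx', hy'⟩ := le_add_one_of_mem_gridCell hδ hz' hz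
  have hmid : z ∈ gridCell δ (x', y) := ⟨hz'.1, hz.2⟩
  by_cases hn : n (x, y) = n (x', y)
  · rw [hn] at hne
    obtain rfl | rfl | rfl : y = y' ∨ y = y' + 1 ∨ y' = y + 1 := by lia
    · exact absurd rfl hne
    · exact (hup x' y' hne.symm).2 (mem_segment_of_mem_gridCell_up hz' hmid)
    · exact (hup x' y hne).2 (mem_segment_of_mem_gridCell_up hmid hz')
  · obtain rfl | rfl | rfl : x = x' ∨ x = x' + 1 ∨ x' = x + 1 := by lia
    · exact absurd rfl hn
    · exact (hright x' y (Ne.symm hn)).2 (mem_segment_of_mem_gridCell_right hmid hz)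
    · exact (hright x y hn).2 (mem_segment_of_mem_gridCell_right hz hmid)

theorem isClosed_gridCell (δ : ℝ) (c : ℤ × ℤ) : IsClosed (gridCell δ c) :=
  isClosed_Icc.reProdIm isClosed_Icc

theorem isBounded_gridCell (δ : ℝ) (c : ℤ × ℤ) : IsBounded (gridCell δ c) :=
  (Metric.isBounded_Icc _ _).reProdIm (Metric.isBounded_Icc _ _)

theorem HoleFree.enclosesOnly_gridCell_subset {V : Set ℂ} (hV : HoleFree V) (hδ : 0 < δ) :
    EnclosesOnly (gridGraph δ V) fun x y => gridCell δ (x, y) ⊆ V := by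
  intro n hfin hup hright
  let K : Set ℂ := ⋃ c ∈ n.support, gridCell δ c
  have hKclosed : IsClosed K := hfin.isClosed_biUnion fun c _ => isClosed_gridCell δ c
  have hKbdd : IsBounded K := (isBounded_biUnion hfin).2 fun c _ => isBounded_gridCell δ c
  have hKV : K \ interior K ⊆ V := by
    rintro z ⟨hz, hzint⟩
    obtain ⟨⟨x, y⟩, hc, hzc⟩ := mem_iUnion₂.1 hz
    obtain ⟨⟨x', y'⟩, hc', hzc'⟩ : ∃ c', n c' = 0 ∧ z ∈ gridCell δ c' := by
      by_contra! hcells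
      refine hzint (mem_interior_iff_mem_nhds.2 ?_)
      filter_upwards [eventually_mem_gridCell_gridFloor hδ z] with w hw
      exact mem_iUnion₂.2 ⟨_, fun h => hcells _ h hw, mem_gridCell_gridFloor hδ w⟩
    exact mem_of_mem_gridCell_of_ne hδ hup hright hzc hzc' (hc'.symm ▸ hc)
  have hfr : frontier (interior K) ⊆ V := by
    rw [isOpen_interior.frontier_eq]
    exact (sdiff_subset_sdiff_left hKclosed.closure_interior_subset).trans hKV
  have hint : interior K ⊆ V := hV _ isOpen_interior (hKbdd.subset interior_subset) hfr
  have hsub : K ⊆ V := fun z hz => by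
    by_cases hzint : z ∈ interior K
    exacts [hint hzint, hKV ⟨hz, hzint⟩]
  exact fun x y hxy => (subset_biUnion_of_mem (u := gridCell δ) hxy).trans hsub

end PlaneGrid

section GridWalks

open Complex

variable {δ : ℝ} {u v : ℤ × ℤ}

theorem reachable_gridGraph_of_fst_le {I J : Set ℝ} (hI : I.OrdConnected) (hJ : J.OrdConnected)
    (hδ : 0 ≤ δ) {x x' y : ℤ} (hxx' : x ≤ x') (hx : gridPoint δ (x, y) ∈ I ×ℂ J)
    (hx' : gridPoint δ (x', y) ∈ I ×ℂ J) :
    (gridGraph δ (I ×ℂ J)).Reachable (x, y) (x', y) := by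
  induction x', hxx' using Int.leInduction with
  | base => rfl
  | succ x' hle ih =>
    have hmem : gridPoint δ (x', y) ∈ I ×ℂ J := by
      refine ⟨hI.out hx.1 hx'.1 ⟨?_, ?_⟩, hx.2⟩ <;> dsimp [gridPoint] <;> gcongr
      lia
    refine (ih hmem).trans (Adj.reachable ⟨hasse_int_prod_adj.2 (.inl ⟨rfl, .inl rfl⟩), ?_⟩)
    exact (convex_reProdIm hI.convex hJ.convex).segment_subset hmem hx'

theorem reachable_gridGraph_of_snd_le {I J : Set ℝ} (hI : I.OrdConnected) (hJ : J.OrdConnected)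
    (hδ : 0 ≤ δ) {x y y' : ℤ} (hyy' : y ≤ y') (hy : gridPoint δ (x, y) ∈ I ×ℂ J)
    (hy' : gridPoint δ (x, y') ∈ I ×ℂ J) :
    (gridGraph δ (I ×ℂ J)).Reachable (x, y) (x, y') := by
  induction y', hyy' using Int.leInduction with
  | base => rfl
  | succ y' hle ih =>
    have hmem : gridPoint δ (x, y') ∈ I ×ℂ J := by
      refine ⟨hy.1, hJ.out hy.2 hy'.2 ⟨?_, ?_⟩⟩ <;> dsimp [gridPoint] <;> gcongr
      lia
    refine (ih hmem).trans (Adj.reachable ⟨hasse_int_prod_adj.2 (.inr ⟨rfl, .inl rfl⟩), ?_⟩)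
    exact (convex_reProdIm hI.convex hJ.convex).segment_subset hmem hy'

theorem reachable_gridGraph_reProdIm {I J : Set ℝ} (hI : I.OrdConnected) (hJ : J.OrdConnected)
    (hδ : 0 ≤ δ) (hu : gridPoint δ u ∈ I ×ℂ J) (hv : gridPoint δ v ∈ I ×ℂ J) :
    (gridGraph δ (I ×ℂ J)).Reachable u v := by
  obtain ⟨x, y⟩ := u
  obtain ⟨x', y'⟩ := v
  have hmid : gridPoint δ (x', y) ∈ I ×ℂ J := ⟨hv.1, hu.2⟩
  have hhor : (gridGraph δ (I ×ℂ J)).Reachable (x, y) (x', y) := by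
    rcases le_total x x' with h | h
    exacts [reachable_gridGraph_of_fst_le hI hJ hδ h hu hmid,
      (reachable_gridGraph_of_fst_le hI hJ hδ h hmid hu).symm]
  refine hhor.trans ?_
  rcases le_total y y' with h | h
  exacts [reachable_gridGraph_of_snd_le hI hJ hδ h hmid hv,
    (reachable_gridGraph_of_snd_le hI hJ hδ h hv hmid).symm]

/-- The labelling of the steps of a grid walk induced by a labelling of pairs of points. -/
def gridLabel {H : Type*} (δ : ℝ) (τ : ℂ → ℂ → H) (u v : ℤ × ℤ) : H :=
  τ (gridPoint δ u) (gridPoint δ v)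

variable {H : Type*} [Group H] {C S : Set ℂ} {τ : ℂ → ℂ → H}

theorem IsConvexCocycle.walkProd_of_convex (hτ : IsConvexCocycle C τ) (hS : Convex ℝ S)
    (hSC : S ⊆ C) (p : (gridGraph δ S).Walk u v) (hu : gridPoint δ u ∈ S) :
    walkProd (gridLabel δ τ) p = τ (gridPoint δ u) (gridPoint δ v) := by
  suffices h : gridPoint δ v ∈ S ∧
    walkProd (gridLabel δ τ) p = τ (gridPoint δ u) (gridPoint δ v) from h.2
  induction p with
  | nil => exact ⟨hu, walkProd_nil.trans (hτ.self (hSC hu)).symm⟩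
  | cons h p ih =>
    have hmem := h.2 (right_mem_segment ℝ _ _)
    obtain ⟨hv, hp⟩ := ih hmem
    exact ⟨hv, by rw [walkProd_cons, hp, gridLabel, hτ hS hSC hu hmem hv]⟩

theorem IsConvexCocycle.isFlatCell (hτ : IsConvexCocycle C τ) (hδ : 0 ≤ δ) {x y : ℤ}
    (h : gridCell δ (x, y) ⊆ C) : IsFlatCell (gridGraph δ C) (gridLabel δ τ) x y := by
  have hcell := convex_gridCell δ (x, y)
  have h₀₀ : gridPoint δ (x, y) ∈ gridCell δ (x, y) :=
    gridPoint_mem_gridCell hδ ⟨le_rfl, le_rfl⟩ ⟨by simp, by simp⟩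
  have h₁₀ : gridPoint δ (x + 1, y) ∈ gridCell δ (x, y) :=
    gridPoint_mem_gridCell hδ ⟨by simp, le_rfl⟩ ⟨le_rfl, by simp⟩
  have h₀₁ : gridPoint δ (x, y + 1) ∈ gridCell δ (x, y) :=
    gridPoint_mem_gridCell hδ ⟨le_rfl, by simp⟩ ⟨by simp, le_rfl⟩
  have h₁₁ : gridPoint δ (x + 1, y + 1) ∈ gridCell δ (x, y) :=
    gridPoint_mem_gridCell hδ ⟨by simp, by simp⟩ ⟨le_rfl, le_rfl⟩
  exact
    { left := ⟨hasse_int_prod_adj.2 (by simp), (hcell.segment_subset h₀₀ h₀₁).trans h⟩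
      bottom := ⟨hasse_int_prod_adj.2 (by simp), (hcell.segment_subset h₀₀ h₁₀).trans h⟩
      right := ⟨hasse_int_prod_adj.2 (by simp), (hcell.segment_subset h₁₀ h₁₁).trans h⟩
      prod_eq := by
        simp only [gridLabel]
        rw [hτ hcell h h₀₀ h₁₀ h₁₁, hτ hcell h h₀₁ h₀₀ h₁₁] }

theorem HoleFree.walkProd_gridLabel_eq_one (hC : HoleFree C) (hτ : IsConvexCocycle C τ)
    (hδ : 0 < δ) (p : (gridGraph δ C).Walk u u) : walkProd (gridLabel δ τ) p = 1 :=
  walkProd_eq_one_of_enclosesOnly_isFlatCell gridGraph_le_hasse (fun _ _ h => hτ.mul_swap h.2)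
    (fun n hfin hup hright x y hxy =>
      hτ.isFlatCell hδ.le (hC.enclosesOnly_gridCell_subset hδ n hfin hup hright x y hxy)) p

end GridWalks

section UnitIntervalSubdivision

open unitInterval

theorem rel_zero_one_of_local {R : I → I → Prop}
    (htrans : ∀ t₀ t₁ t₂, R t₀ t₁ → R t₁ t₂ → R t₀ t₂)
    (hloc : ∀ r, ∃ N, IsOpen N ∧ r ∈ N ∧ ∀ t t', t ≤ t' → Icc t t' ⊆ N → R t t') : R 0 1 := by
  choose N hN hmem hR using hloc
  obtain ⟨t, ht₀, hmono, ⟨n, hn⟩, hsub⟩ := exists_monotone_Icc_subset_open_cover_unitInterval hN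
    fun r _ => mem_iUnion.2 ⟨r, hmem r⟩
  have hstep : ∀ k, R (t k) (t (k + 1)) := fun k =>
    let ⟨r, hr⟩ := hsub k
    hR r _ _ (hmono k.le_succ) hr
  have hreach : ∀ k, R (t 0) (t (k + 1)) := fun k => by
    induction k with
    | zero => exact hstep 0
    | succ k ih => exact htrans _ _ _ ih (hstep (k + 1))
  simpa only [ht₀, hn (n + 1) n.le_succ] using hreach n

end UnitIntervalSubdivision

section GridApproximation

open Complex Metric

variable {δ : ℝ} {C : Set ℂ} {x₀ a b c : C} {s : ∀ x, Path x₀ x}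

/-- The open square centred at `z` with sides of length `2 * r`. -/
def openBox (z : ℂ) (r : ℝ) : Set ℂ := ball z.re r ×ℂ ball z.im r

theorem convex_openBox (z : ℂ) (r : ℝ) : Convex ℝ (openBox z r) :=
  convex_reProdIm (convex_ball _ _) (convex_ball _ _)

theorem isOpen_openBox (z : ℂ) (r : ℝ) : IsOpen (openBox z r) :=
  isOpen_ball.reProdIm isOpen_ball

theorem mem_openBox_self (z : ℂ) {r : ℝ} (hr : 0 < r) : z ∈ openBox z r :=
  ⟨mem_ball_self hr, mem_ball_self hr⟩

theorem openBox_subset_openBox (z : ℂ) {r r' : ℝ} (h : r ≤ r') : openBox z r ⊆ openBox z r' :=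
  fun _ hw => ⟨ball_subset_ball h hw.1, ball_subset_ball h hw.2⟩

theorem openBox_subset_ball (z : ℂ) (r : ℝ) : openBox z r ⊆ ball z (2 * r) := fun w hw => by
  have hre : |(w - z).re| < r := hw.1
  have him : |(w - z).im| < r := hw.2
  rw [Metric.mem_ball, dist_eq_norm]
  linarith [norm_le_abs_re_add_abs_im (w - z)]

theorem reachable_gridGraph_openBox (hδ : 0 ≤ δ) {z : ℂ} {r : ℝ} {u v : ℤ × ℤ}
    (hu : gridPoint δ u ∈ openBox z r) (hv : gridPoint δ v ∈ openBox z r) :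
    (gridGraph δ (openBox z r)).Reachable u v :=
  reachable_gridGraph_reProdIm (convex_ball _ _).ordConnected (convex_ball _ _).ordConnected
    hδ hu hv

/-- The grid point obtained by rounding both coordinates of `z` down. -/
noncomputable def gridRound (δ : ℝ) (z : ℂ) : ℂ := gridPoint δ (gridFloor δ z)

theorem gridRound_mem_openBox (hδ : 0 < δ) {z w : ℂ} (hw : w ∈ openBox z δ) :
    gridRound δ w ∈ openBox z (2 * δ) := by
  have key : ∀ {t t₀ : ℝ}, t ∈ ball t₀ δ → δ * ⌊t / δ⌋ ∈ ball t₀ (2 * δ) := fun {t t₀} ht => by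
    rw [Real.ball_eq_Ioo] at ht ⊢
    have hle := mul_floor_div_le hδ t
    have hlt := lt_mul_floor_div_add_one hδ t
    constructor <;> linarith [ht.1, ht.2]
  exact ⟨key hw.1, key hw.2⟩

theorem segment_gridRound_subset (hδ : 0 < δ) {z : ℂ} {V : Set ℂ} (hV : openBox z (2 * δ) ⊆ V) :
    segment ℝ z (gridRound δ z) ⊆ V :=
  ((convex_openBox z _).segment_subset (mem_openBox_self z (by positivity))
    (gridRound_mem_openBox hδ (mem_openBox_self z hδ))).trans hV

theorem exists_openBox_subset {K : Set ℂ} (hK : IsCompact K) (hC : IsOpen C) (hKC : K ⊆ C) :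
    ∃ δ > 0, ∀ z ∈ K, openBox z (2 * δ) ⊆ C := by
  obtain ⟨ε, hε, hthick⟩ := hK.exists_thickening_subset_open hC hKC
  refine ⟨ε / 4, by positivity, fun z hz => (openBox_subset_ball z _).trans ?_⟩
  rw [show 2 * (2 * (ε / 4)) = ε by ring]
  exact (ball_subset_thickening hz ε).trans hthick

/-- The path `p` has the same loop class as some grid walk, joined to the endpoints of `p` by
straight segments. -/
def HasGridApprox (δ : ℝ) (s : ∀ x, Path x₀ x) (p : Path a b) : Prop :=
  ∃ w : (gridGraph δ C).Walk (gridFloor δ a) (gridFloor δ b),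
    loopClass s p = segmentClass s a (gridRound δ a) *
      walkProd (gridLabel δ (segmentClass s)) w * segmentClass s (gridRound δ b) b

namespace HasGridApprox

theorem of_homotopic {p q : Path a b} (hp : HasGridApprox δ s p) (h : p.Homotopic q) :
    HasGridApprox δ s q := by
  rwa [HasGridApprox, ← loopClass_eq_of_homotopic s h]

theorem trans {p : Path a b} {q : Path b c} (hp : HasGridApprox δ s p) (hq : HasGridApprox δ s q)
    (hb : segment ℝ (b : ℂ) (gridRound δ b) ⊆ C) : HasGridApprox δ s (p.trans q) := by
  obtain ⟨v, hv⟩ := hp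
  obtain ⟨w, hw⟩ := hq
  have hcancel := (isConvexCocycle_segmentClass s).mul_swap (segment_symm ℝ (b : ℂ) _ ▸ hb)
  refine ⟨v.append w, ?_⟩
  rw [loopClass_trans, hv, hw, walkProd_append]
  simp only [mul_assoc]
  rw [← mul_assoc (segmentClass s _ (b : ℂ)), hcancel, one_mul]

theorem of_mem_openBox {z : ℂ} (hδ : 0 < δ) (hz : openBox z (2 * δ) ⊆ C) {p : Path a b}
    (hp : ∀ t, (p t : ℂ) ∈ openBox z δ) : HasGridApprox δ s p := by
  have hτ := isConvexCocycle_segmentClass s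
  have hconv := convex_openBox z (2 * δ)
  have hmono : openBox z δ ⊆ openBox z (2 * δ) := openBox_subset_openBox z (by linarith)
  have ha : (a : ℂ) ∈ openBox z δ := by simpa only [Path.source] using hp 0
  have hb : (b : ℂ) ∈ openBox z δ := by simpa only [Path.target] using hp 1
  have ha' := gridRound_mem_openBox hδ ha
  have hb' := gridRound_mem_openBox hδ hb
  obtain ⟨w⟩ := reachable_gridGraph_openBox hδ.le ha' hb'
  refine ⟨w.mapLe (gridGraph_mono hz), ?_⟩
  rw [walkProd_mapLe, hτ.walkProd_of_convex hconv hz w ha',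
    loopClass_eq_segmentClass s hconv hz p fun t => hmono (hp t)]
  exact ((congrArg (· * _) (hτ hconv hz (hmono ha) ha' hb')).trans
    (hτ hconv hz (hmono ha) hb' (hmono hb))).symm

theorem of_cast {p : Path a b} {a' b' : C} {ha : a' = a} {hb : b' = b}
    (h : HasGridApprox δ s (p.cast ha hb)) : HasGridApprox δ s p := by
  subst ha hb
  exact h

theorem of_forall_openBox_subset (hδ : 0 < δ) {γ : Path a b}
    (hγ : ∀ t, openBox (γ t : ℂ) (2 * δ) ⊆ C) : HasGridApprox δ s γ := by
  refine of_cast (γ.subpath_zero_one ▸ rel_zero_one_of_local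
    (R := fun t t' => HasGridApprox δ s (γ.subpath t t')) ?_ fun r => ?_)
  · intro t₀ t₁ t₂ h₀₁ h₁₂
    exact (h₀₁.trans h₁₂ (segment_gridRound_subset hδ (hγ t₁))).of_homotopic
      ⟨Path.Homotopy.subpathTransSubpath γ t₀ t₁ t₂⟩
  · refine ⟨(fun t => (γ t : ℂ)) ⁻¹' openBox (γ r) δ,
      (isOpen_openBox _ _).preimage (by fun_prop), mem_openBox_self _ hδ, fun t t' htt' hsub => ?_⟩
    refine of_mem_openBox hδ (hγ r) fun t₀ => ?_
    have hmem : γ.subpath t t' t₀ ∈ γ '' Icc t t' :=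
      γ.range_subpath_of_le t t' htt' ▸ mem_range_self t₀
    obtain ⟨t₁, ht₁, heq⟩ := hmem
    exact heq ▸ hsub ht₁

end HasGridApprox

theorem HoleFree.simplyConnectedSpace (hfree : HoleFree C) (hopen : IsOpen C)
    (hconn : IsPathConnected C) : SimplyConnectedSpace C := by
  have := isPathConnected_iff_pathConnectedSpace.1 hconn
  refine simply_connected_iff_loops_nullhomotopic.2 ⟨this, fun x γ => ?_⟩
  let s (y : C) : Path x y := PathConnectedSpace.somePath x y
  obtain ⟨δ, hδ, hbox⟩ := exists_openBox_subset (isCompact_range (f := fun t => (γ t : ℂ))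
    (by fun_prop)) hopen (range_subset_iff.2 fun t => (γ t).2)
  have hτ := isConvexCocycle_segmentClass s
  have hround : segment ℝ (x : ℂ) (gridRound δ x) ⊆ C :=
    segment_gridRound_subset hδ (hbox x ⟨0, congrArg Subtype.val γ.source⟩)
  obtain ⟨w, hw⟩ : HasGridApprox δ s γ :=
    .of_forall_openBox_subset hδ fun t => hbox _ (mem_range_self t)
  rw [hfree.walkProd_gridLabel_eq_one hτ hδ w, mul_one, hτ.mul_swap hround] at hw
  exact homotopic_refl_of_loopClass_eq_one s hw

end GridApproximation

theorem HoleFree.simplyConnectedSpace_connectedComponentIn {V : Set ℂ} (hfree : HoleFree V)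
    (hV : IsOpen V) {x : ℂ} (hx : x ∈ V) : SimplyConnectedSpace (connectedComponentIn V x) :=
  have hopen : IsOpen (connectedComponentIn V x) := hV.connectedComponentIn
  (hfree.of_isOpen_sdiff (connectedComponentIn_subset V x) hopen
    (isOpen_sdiff_connectedComponentIn hV x)).simplyConnectedSpace hopen
    (hopen.isConnected_iff_isPathConnected.1 (isConnected_connectedComponentIn_iff.2 hx))

/-- let `U ⊆ ℂ` be open with all connected components simply connected
and `f : U → ℂ` holomorphic. Define `D 1 = U`, `D (n+1) = {z ∈ U | f z ∈ D n}`
(the domain of the iterate `fⁿ`). Then each `D n` (`n ≥ 1`) is open and all its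
connected components are simply connected. -/
theorem stmt_13 (U : Set ℂ) (hU : IsOpen U)
    (hUsc : ∀ x ∈ U, SimplyConnectedSpace (connectedComponentIn U x))
    (f : ℂ → ℂ) (hf : DifferentiableOn ℂ f U)
    (D : ℕ → Set ℂ) (hD1 : D 1 = U)
    (hDrec : ∀ n : ℕ, 1 ≤ n → D (n + 1) = {z ∈ U | f z ∈ D n}) :
    ∀ n : ℕ, 1 ≤ n → IsOpen (D n) ∧
      ∀ x ∈ D n, SimplyConnectedSpace (connectedComponentIn (D n) x) := by
  have hUfree : HoleFree U := holeFree_of_simplyConnected_components hU hUsc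
  have hD : ∀ n : ℕ, 1 ≤ n → IsOpen (D n) ∧ HoleFree (D n) := fun n hn => by
    induction n, hn using Nat.le_induction with
    | base => exact hD1 ▸ ⟨hU, hUfree⟩
    | succ n hn ih =>
      rw [hDrec n hn]
      exact ⟨hf.continuousOn.isOpen_inter_preimage hU ih.1, hUfree.inter_preimage ih.2 hU hf⟩
  exact fun n hn => ⟨(hD n hn).1, fun x hx =>
    (hD n hn).2.simplyConnectedSpace_connectedComponentIn (hD n hn).1 hx⟩
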